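/- arXiv:1702.00972 — 5 statements merged into one kernel-verified Lean document; each statement's English description precedes it below -/
import Mathlib

section
/- (Sobolev embedding inequality for Besov quasi-norms of band-limited sequences.) Let n ≥ 1, let s, s₀ ∈ ℝ and 0 < p₀ ≤ p < ∞ satisfy s − n/p = s₀ − n/p₀, let 0 < q < ∞ and A > 0. Then there exists a constant C > 0 such that for every sequence (f_j)_{j∈ℕ} of Schwartz functions on ℝⁿ with supp 𝓕f_j contained in the closed ball of radius A·2^j about the origin, one has (∑_{j=0}^∞ (2^{s j} ‖f_j‖_p)^q)^{1/q} ≤ C · (∑_{j=0}^∞ (2^{s₀ j} ‖f_j‖_{p₀})^q)^{1/q}, where both sides may be infinite. -/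
open scoped ENNReal NNReal FourierTransform SchwartzMap
open MeasureTheory

theorem aux_repro (n : ℕ) : ∃ φ : 𝓢(EuclideanSpace ℝ (Fin n), ℂ),
    ∀ g : 𝓢(EuclideanSpace ℝ (Fin n), ℂ),
      Function.support (𝓕 (g : EuclideanSpace ℝ (Fin n) → ℂ)) ⊆ Metric.closedBall 0 1 →
      ∀ x, g x = ∫ y, g y * φ (y - x) := by
  let b : ContDiffBump (0 : EuclideanSpace ℝ (Fin n)) := ⟨1, 2, one_pos, one_lt_two⟩
  have hc : HasCompactSupport (fun x => ((b x : ℝ) : ℂ)) :=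
    b.hasCompactSupport.comp_left (g := fun r : ℝ => (r : ℂ)) (by simp)
  have hd : ContDiff ℝ (⊤ : ℕ∞) (fun x => ((b x : ℝ) : ℂ)) :=
    Complex.ofRealCLM.contDiff.comp b.contDiff
  let ψ : 𝓢(EuclideanSpace ℝ (Fin n), ℂ) := hc.toSchwartzMap hd
  have hψ1 : ∀ x ∈ Metric.closedBall (0 : EuclideanSpace ℝ (Fin n)) 1, ψ x = 1 := by
    intro x hx
    have : b x = 1 := b.one_of_mem_closedBall hx
    simp [ψ, this]
  refine ⟨𝓕 ψ, fun g hg x => ?_⟩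
  have h1 : g x = 𝓕⁻ (𝓕 (g : EuclideanSpace ℝ (Fin n) → ℂ)) x := by
    rw [g.continuous.fourierInv_fourier_eq g.integrable]
    rw [← SchwartzMap.fourier_coe]
    exact (𝓕 g).integrable
  set h : EuclideanSpace ℝ (Fin n) → ℂ := fun ξ => 𝐞 (inner ℝ ξ x) • ψ ξ with hh
  have hI : Integrable h := by
    have := (Real.fourierIntegral_convergent_iff (f := ψ) (μ := volume) (-x)).2 ψ.integrable
    simpa [hh] using this
  have h2 : ∀ y, 𝓕 h y = (𝓕 ψ) (y - x) := by
    intro y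
    rw [SchwartzMap.fourier_coe, Real.fourier_eq, Real.fourier_eq]
    congr 1 with v
    simp only [hh]
    rw [smul_smul, ← AddChar.map_add_eq_mul]
    congr 2
    rw [inner_sub_right]; ring
  have h3 := VectorFourier.integral_fourierIntegral_smul_eq_flip (L := innerₗ (EuclideanSpace ℝ (Fin n)))
      (μ := volume) (ν := volume) Real.continuous_fourierChar continuous_inner g.integrable hI
  rw [flip_innerₗ] at h3
  change ∫ ξ, 𝓕 (g : EuclideanSpace ℝ (Fin n) → ℂ) ξ • h ξ = ∫ y, g y • 𝓕 h y at h3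
  simp only [h2, smul_eq_mul] at h3
  rw [← h3, h1, Real.fourierInv_eq]
  congr 1 with v
  by_cases hv : 𝓕 (g : EuclideanSpace ℝ (Fin n) → ℂ) v = 0
  · simp [hv]
  · simp only [hh]
    rw [hψ1 v (hg hv), Circle.smul_def, Circle.smul_def]
    simp [mul_comm]

theorem aux_sup (n : ℕ) (p₀ : ℝ) (hp₀ : 0 < p₀) : ∃ C : ℝ≥0∞, C ≠ ∞ ∧
    ∀ g : 𝓢(EuclideanSpace ℝ (Fin n), ℂ),
      Function.support (𝓕 (g : EuclideanSpace ℝ (Fin n) → ℂ)) ⊆ Metric.closedBall 0 1 →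
      ∀ x, (‖g x‖₊ : ℝ≥0∞) ^ p₀ ≤ C * ∫⁻ y, (‖g y‖₊ : ℝ≥0∞) ^ p₀ := by
  obtain ⟨φ, hφ⟩ := aux_repro n
  have key : ∀ g : 𝓢(EuclideanSpace ℝ (Fin n), ℂ),
      Function.support (𝓕 (g : EuclideanSpace ℝ (Fin n) → ℂ)) ⊆ Metric.closedBall 0 1 →
      ∀ x, (‖g x‖₊ : ℝ≥0∞) ≤ ∫⁻ y, (‖g y‖₊ : ℝ≥0∞) * (‖φ (y - x)‖₊ : ℝ≥0∞) := by
    intro g hg x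
    have := enorm_integral_le_lintegral_enorm (μ := volume) (fun y => g y * φ (y - x))
    rw [← hφ g hg x] at this
    simp only [enorm_mul] at this
    exact this
  have bdd : ∀ g : 𝓢(EuclideanSpace ℝ (Fin n), ℂ), ∃ B : ℝ≥0, ∀ x, (‖g x‖₊ : ℝ≥0∞) ≤ B := by
    intro g
    obtain ⟨B, hB⟩ := g.decay 0 0
    refine ⟨B.toNNReal, fun x => ?_⟩
    have := hB.2 x
    simp only [pow_zero, one_mul, norm_iteratedFDeriv_zero] at this
    rw [ENNReal.coe_le_coe]
    exact (Real.le_toNNReal_iff_coe_le hB.1.le).2 this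
  rcases le_or_gt p₀ 1 with h1 | h1
  · obtain ⟨B, hB⟩ := bdd φ
    refine ⟨B, ENNReal.coe_ne_top, fun g hg x => ?_⟩
    obtain ⟨D, hD⟩ := bdd g
    set M : ℝ≥0∞ := ⨆ x, (‖g x‖₊ : ℝ≥0∞) with hM
    have hMt : M ≠ ∞ := ne_top_of_le_ne_top ENNReal.coe_ne_top (iSup_le hD)
    have hle : ∀ x, (‖g x‖₊ : ℝ≥0∞) ≤ M := fun x => le_iSup (fun x => (‖g x‖₊ : ℝ≥0∞)) x
    set I := ∫⁻ y, (‖g y‖₊ : ℝ≥0∞) ^ p₀ with hI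
    have hMle : M ≤ M ^ (1 - p₀) * (B * I) := by
      refine iSup_le fun x => (key g hg x).trans ?_
      calc ∫⁻ y, (‖g y‖₊ : ℝ≥0∞) * (‖φ (y - x)‖₊ : ℝ≥0∞)
          ≤ ∫⁻ y, (M ^ (1 - p₀) * B) * (‖g y‖₊ : ℝ≥0∞) ^ p₀ := by
            refine lintegral_mono fun y => ?_
            have e : (‖g y‖₊ : ℝ≥0∞) = (‖g y‖₊ : ℝ≥0∞) ^ (1 - p₀) * (‖g y‖₊ : ℝ≥0∞) ^ p₀ := by
              rw [← ENNReal.rpow_add_of_nonneg _ _ (by linarith) hp₀.le]; simp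
            calc (‖g y‖₊ : ℝ≥0∞) * (‖φ (y - x)‖₊ : ℝ≥0∞)
                = ((‖g y‖₊ : ℝ≥0∞) ^ (1 - p₀) * (‖g y‖₊ : ℝ≥0∞) ^ p₀) * (‖φ (y - x)‖₊ : ℝ≥0∞) := by
                  rw [← e]
              _ ≤ (M ^ (1 - p₀) * (‖g y‖₊ : ℝ≥0∞) ^ p₀) * B := by
                  gcongr
                  · exact hle y
                  · exact ENNReal.coe_le_coe.1 (hB _)
              _ = _ := by ring
        _ = (M ^ (1 - p₀) * B) * I := by
            rw [lintegral_const_mul' _ _ (by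
              exact ENNReal.mul_ne_top (ENNReal.rpow_ne_top_of_nonneg (by linarith) hMt) ENNReal.coe_ne_top)]
        _ = _ := by ring
    refine (ENNReal.rpow_le_rpow (hle x) hp₀.le).trans ?_
    rcases eq_or_ne M 0 with h0 | h0
    · rw [h0, ENNReal.zero_rpow_of_pos hp₀]; exact zero_le
    · have e : M = M ^ (1 - p₀) * M ^ p₀ := by
        rw [← ENNReal.rpow_add_of_nonneg _ _ (by linarith) hp₀.le]; simp
      have h5 : M ^ (1 - p₀) * M ^ p₀ ≤ M ^ (1 - p₀) * (B * I) := e ▸ hMle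
      refine (ENNReal.mul_le_mul_iff_right ?_ ?_).1 h5
      · simp [ENNReal.rpow_eq_zero_iff, h0, hMt]
      · exact ENNReal.rpow_ne_top_of_nonneg (by linarith) hMt
  · have hc : p₀.HolderConjugate (Real.conjExponent p₀) := Real.HolderConjugate.conjExponent h1
    set r := Real.conjExponent p₀ with hr
    have hr0 : 0 < r := hc.symm.pos
    have hfin : ∫⁻ y, (‖φ y‖₊ : ℝ≥0∞) ^ r ≠ ∞ := by
      have := (φ.memLp (ENNReal.ofReal r)).eLpNorm_lt_top
      rw [eLpNorm_lt_top_iff_lintegral_rpow_enorm_lt_top (by simpa using hr0) ENNReal.ofReal_ne_top,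
        ENNReal.toReal_ofReal hr0.le] at this
      exact this.ne
    refine ⟨((∫⁻ y, (‖φ y‖₊ : ℝ≥0∞) ^ r) ^ (1 / r)) ^ p₀, ?_, fun g hg x => ?_⟩
    · exact ENNReal.rpow_ne_top_of_nonneg hp₀.le (ENNReal.rpow_ne_top_of_nonneg (by positivity) hfin)
    · have h2 := ENNReal.lintegral_mul_le_Lp_mul_Lq volume hc
        (f := fun y => (‖g y‖₊ : ℝ≥0∞)) (g := fun y => (‖φ (y - x)‖₊ : ℝ≥0∞))
        (by have := g.continuous; fun_prop) (by have := φ.continuous; fun_prop)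
      have h3 := (key g hg x).trans h2
      rw [lintegral_sub_right_eq_self (fun y => (‖φ y‖₊ : ℝ≥0∞) ^ r) x] at h3
      refine (ENNReal.rpow_le_rpow h3 hp₀.le).trans ?_
      rw [ENNReal.mul_rpow_of_nonneg _ _ hp₀.le, ← ENNReal.rpow_mul, one_div_mul_cancel hp₀.ne',
        ENNReal.rpow_one, mul_comm]

theorem aux_unit (n : ℕ) (p p₀ : ℝ) (hp₀ : 0 < p₀) (hpp : p₀ ≤ p) : ∃ C : ℝ≥0∞, C ≠ ∞ ∧
    ∀ g : 𝓢(EuclideanSpace ℝ (Fin n), ℂ),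
      Function.support (𝓕 (g : EuclideanSpace ℝ (Fin n) → ℂ)) ⊆ Metric.closedBall 0 1 →
      (∫⁻ y, (‖g y‖₊ : ℝ≥0∞) ^ p) ^ (1 / p) ≤ C * (∫⁻ y, (‖g y‖₊ : ℝ≥0∞) ^ p₀) ^ (1 / p₀) := by
  obtain ⟨C, hC, H⟩ := aux_sup n p₀ hp₀
  have hp : 0 < p := hp₀.trans_le hpp
  have ha : 0 ≤ (p - p₀) / p₀ := div_nonneg (by linarith) hp₀.le
  refine ⟨(C ^ ((p - p₀) / p₀)) ^ (1 / p), ?_, fun g hg => ?_⟩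
  · exact ENNReal.rpow_ne_top_of_nonneg (by positivity) (ENNReal.rpow_ne_top_of_nonneg ha hC)
  set I := ∫⁻ y, (‖g y‖₊ : ℝ≥0∞) ^ p₀ with hI
  have h1 : ∫⁻ y, (‖g y‖₊ : ℝ≥0∞) ^ p ≤ (C * I) ^ ((p - p₀) / p₀) * I := by
    rw [hI, ← lintegral_const_mul _ (by have := g.continuous; fun_prop)]
    refine lintegral_mono fun y => ?_
    have e : (‖g y‖₊ : ℝ≥0∞) ^ p =
        ((‖g y‖₊ : ℝ≥0∞) ^ p₀) ^ ((p - p₀) / p₀) * (‖g y‖₊ : ℝ≥0∞) ^ p₀ := by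
      rw [← ENNReal.rpow_mul, ← ENNReal.rpow_add_of_nonneg _ _ (by positivity) hp₀.le]
      congr 1
      field_simp; ring
    simp only [e]
    gcongr
    exact H g hg y
  calc _ ≤ ((C * I) ^ ((p - p₀) / p₀) * I) ^ (1 / p) := ENNReal.rpow_le_rpow h1 (by positivity)
    _ = _ := by
      rw [ENNReal.mul_rpow_of_nonneg _ _ ha, mul_assoc,
        ENNReal.mul_rpow_of_nonneg _ _ (by positivity)]
      congr 1
      nth_rewrite 2 [← ENNReal.rpow_one I]
      rw [← ENNReal.rpow_add_of_nonneg _ _ ha zero_le_one, ← ENNReal.rpow_mul]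
      congr 1
      field_simp; ring

theorem aux_scale (n : ℕ) (p p₀ : ℝ) (hp₀ : 0 < p₀) (hpp : p₀ ≤ p) : ∃ C : ℝ≥0∞, C ≠ ∞ ∧
    ∀ R : ℝ, 0 < R → ∀ f : 𝓢(EuclideanSpace ℝ (Fin n), ℂ),
      Function.support (𝓕 (f : EuclideanSpace ℝ (Fin n) → ℂ)) ⊆ Metric.closedBall 0 R →
      (∫⁻ y, (‖f y‖₊ : ℝ≥0∞) ^ p) ^ (1 / p) ≤
        C * ENNReal.ofReal R ^ (n / p₀ - n / p) * (∫⁻ y, (‖f y‖₊ : ℝ≥0∞) ^ p₀) ^ (1 / p₀) := by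
  obtain ⟨C, hC, H⟩ := aux_unit n p p₀ hp₀ hpp
  have hp : 0 < p := hp₀.trans_le hpp
  refine ⟨C, hC, fun R hR f hf => ?_⟩
  let e : EuclideanSpace ℝ (Fin n) ≃L[ℝ] EuclideanSpace ℝ (Fin n) :=
    (LinearEquiv.smulOfNeZero ℝ _ R⁻¹ (inv_ne_zero hR.ne')).toContinuousLinearEquiv
  have he : ∀ x, e x = R⁻¹ • x := fun x => rfl
  let g : 𝓢(EuclideanSpace ℝ (Fin n), ℂ) := SchwartzMap.compCLMOfContinuousLinearEquiv ℂ e f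
  have hg : ∀ x, g x = f (R⁻¹ • x) := fun x => rfl
  have hF : ∀ ξ, 𝓕 (g : EuclideanSpace ℝ (Fin n) → ℂ) ξ =
      (R ^ n : ℝ) • 𝓕 (f : EuclideanSpace ℝ (Fin n) → ℂ) (R • ξ) := by
    intro ξ
    rw [Real.fourier_eq, Real.fourier_eq]
    have := Measure.integral_comp_inv_smul_of_nonneg (volume : Measure (EuclideanSpace ℝ (Fin n)))
      (fun v => 𝐞 (-inner ℝ v (R • ξ)) • f v) hR.le
    rw [finrank_euclideanSpace_fin] at this
    rw [← this]
    congr 1 with v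
    rw [hg, real_inner_smul_left, real_inner_smul_right, inv_mul_cancel_left₀ hR.ne']
  have hL : ∀ t : ℝ, ∫⁻ y, (‖g y‖₊ : ℝ≥0∞) ^ t =
      ENNReal.ofReal R ^ (n : ℝ) * ∫⁻ y, (‖f y‖₊ : ℝ≥0∞) ^ t := by
    intro t
    have h1 := lintegral_map_equiv (μ := volume) (fun y => (‖f y‖₊ : ℝ≥0∞) ^ t)
      e.toHomeomorph.toMeasurableEquiv
    have h2 : Measure.map (e.toHomeomorph.toMeasurableEquiv) volume
        = ENNReal.ofReal (R ^ n) • (volume : Measure (EuclideanSpace ℝ (Fin n))) := by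
      have := Measure.map_addHaar_smul (volume : Measure (EuclideanSpace ℝ (Fin n)))
        (inv_ne_zero hR.ne')
      rw [finrank_euclideanSpace_fin, inv_pow, inv_inv, abs_of_pos (by positivity)] at this
      exact this
    rw [h2, lintegral_smul_measure] at h1
    rw [ENNReal.rpow_natCast, ← ENNReal.ofReal_pow hR.le]
    exact h1.symm
  have h := H g (by
    intro ξ hξ
    have h0 : 𝓕 (f : EuclideanSpace ℝ (Fin n) → ℂ) (R • ξ) ≠ 0 := by
      intro h0
      apply hξ
      rw [hF, h0, smul_zero]
    have := hf h0
    rw [mem_closedBall_zero_iff, norm_smul, Real.norm_of_nonneg hR.le] at this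
    rw [mem_closedBall_zero_iff]
    exact le_of_mul_le_mul_left (by linarith) hR)
  rw [hL, hL, ENNReal.mul_rpow_of_nonneg _ _ (by positivity),
    ENNReal.mul_rpow_of_nonneg _ _ (by positivity), ← ENNReal.rpow_mul, ← ENNReal.rpow_mul] at h
  have hR0 : ENNReal.ofReal R ≠ 0 := by simpa using hR
  have hRt : ENNReal.ofReal R ≠ ∞ := ENNReal.ofReal_ne_top
  have hne : ENNReal.ofReal R ^ ((n : ℝ) * (1 / p)) ≠ 0 := by
    simp [ENNReal.rpow_eq_zero_iff, hR0, hRt]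
  have hnt : ENNReal.ofReal R ^ ((n : ℝ) * (1 / p)) ≠ ∞ :=
    ENNReal.rpow_ne_top_of_nonneg (by positivity) hRt
  refine (ENNReal.mul_le_mul_iff_right hne hnt).1 (h.trans_eq ?_)
  have : ENNReal.ofReal R ^ ((n : ℝ) * (1 / p₀)) =
      ENNReal.ofReal R ^ ((n : ℝ) * (1 / p)) * ENNReal.ofReal R ^ (n / p₀ - n / p) := by
    rw [← ENNReal.rpow_add _ _ hR0 hRt]
    congr 1; ring
  rw [this]; ring

theorem stmt10 (n : ℕ) (hn : 1 ≤ n) (s s₀ p p₀ : ℝ) (hp₀ : 0 < p₀) (hpp : p₀ ≤ p)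
    (hsob : s - n / p = s₀ - n / p₀) (q : ℝ) (hq : 0 < q)
    (A : ℝ) (hA : 0 < A) :
    ∃ C : ℝ≥0∞, 0 < C ∧ C ≠ ∞ ∧
      ∀ f : ℕ → 𝓢(EuclideanSpace ℝ (Fin n), ℂ),
        (∀ j : ℕ, Function.support (𝓕 (f j : EuclideanSpace ℝ (Fin n) → ℂ))
          ⊆ Metric.closedBall 0 (A * 2 ^ (j:ℝ))) →
        (∑' j : ℕ, ((2:ℝ≥0∞) ^ (s * (j:ℝ))
            * (∫⁻ x : EuclideanSpace ℝ (Fin n), (‖f j x‖₊ : ℝ≥0∞) ^ p) ^ (1 / p)) ^ q) ^ (1 / q)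
          ≤ C * (∑' j : ℕ, ((2:ℝ≥0∞) ^ (s₀ * (j:ℝ))
            * (∫⁻ x : EuclideanSpace ℝ (Fin n), (‖f j x‖₊ : ℝ≥0∞) ^ p₀) ^ (1 / p₀)) ^ q) ^ (1 / q) := by
  obtain ⟨K, hK, H⟩ := aux_scale n p p₀ hp₀ hpp
  have hd : (n / p₀ - n / p : ℝ) = s₀ - s := by linarith
  have hA0 : ENNReal.ofReal A ≠ 0 := by simpa using hA
  have hAt : ENNReal.ofReal A ^ (s₀ - s) ≠ ∞ := by
    simp [ENNReal.rpow_eq_top_iff, hA.not_ge]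
  set C : ℝ≥0∞ := K * ENNReal.ofReal A ^ (s₀ - s) + 1 with hC
  refine ⟨C, by simp [hC], by
    rw [hC]; exact ENNReal.add_ne_top.2 ⟨ENNReal.mul_ne_top hK hAt, ENNReal.one_ne_top⟩,
    fun f hf => ?_⟩
  have term : ∀ j : ℕ, (2:ℝ≥0∞) ^ (s * (j:ℝ))
            * (∫⁻ x : EuclideanSpace ℝ (Fin n), (‖f j x‖₊ : ℝ≥0∞) ^ p) ^ (1 / p) ≤
      C * ((2:ℝ≥0∞) ^ (s₀ * (j:ℝ))
            * (∫⁻ x : EuclideanSpace ℝ (Fin n), (‖f j x‖₊ : ℝ≥0∞) ^ p₀) ^ (1 / p₀)) := by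
    intro j
    have h := H (A * 2 ^ (j:ℝ)) (by positivity) (f j) (hf j)
    have e2 : ENNReal.ofReal (A * 2 ^ (j:ℝ)) ^ (s₀ - s) =
        ENNReal.ofReal A ^ (s₀ - s) * (2:ℝ≥0∞) ^ ((j:ℝ) * (s₀ - s)) := by
      rw [ENNReal.ofReal_mul hA.le, ← ENNReal.ofReal_rpow_of_pos two_pos,
        ENNReal.mul_rpow_of_ne_zero hA0 (by simp), ← ENNReal.rpow_mul]
      simp
    have e3 : (2:ℝ≥0∞) ^ (s₀ * (j:ℝ)) = (2:ℝ≥0∞) ^ (s * (j:ℝ)) * (2:ℝ≥0∞) ^ ((j:ℝ) * (s₀ - s)) := by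
      rw [← ENNReal.rpow_add _ _ (by simp) (by simp)]
      congr 1; ring
    rw [hd, e2] at h
    calc _ ≤ (2:ℝ≥0∞) ^ (s * (j:ℝ)) * _ := mul_le_mul_right h _
      _ = (K * ENNReal.ofReal A ^ (s₀ - s)) * ((2:ℝ≥0∞) ^ (s₀ * (j:ℝ))
            * (∫⁻ x : EuclideanSpace ℝ (Fin n), (‖f j x‖₊ : ℝ≥0∞) ^ p₀) ^ (1 / p₀)) := by
          rw [e3]; ring
      _ ≤ _ := by gcongr; exact le_self_add
  have hsum := ENNReal.tsum_le_tsum fun j => ENNReal.rpow_le_rpow (term j) hq.le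
  refine (ENNReal.rpow_le_rpow hsum (by positivity : 0 ≤ 1 / q)).trans_eq ?_
  simp_rw [ENNReal.mul_rpow_of_nonneg C _ hq.le]
  rw [ENNReal.tsum_mul_left, ENNReal.mul_rpow_of_nonneg _ _ (by positivity), ← ENNReal.rpow_mul,
    mul_one_div_cancel hq.ne', ENNReal.rpow_one]
end

section
/- (Triangle inequality for the anisotropic distance function.) Let n ≥ 1 and let a₁, …, a_n be real numbers with a_k ≥ 1 for every k. Let x, y ∈ ℝⁿ with x ≠ 0, y ≠ 0 and x + y ≠ 0, and let s, t, u > 0 satisfy ∑_{k=1}^n x_k²/s^{2a_k} = 1, ∑_{k=1}^n y_k²/t^{2a_k} = 1, and ∑_{k=1}^n (x_k + y_k)²/u^{2a_k} = 1. Then u ≤ s + t. -/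
lemma aux_scale_s12 (a s w : ℝ) (ha : 1 ≤ a) (hs : 0 < s) (hw : s ≤ w) :
    s ^ a / w ^ a ≤ s / w := by
  have hw0 : 0 < w := lt_of_lt_of_le hs hw
  rw [← Real.div_rpow hs.le hw0.le]
  have h := Real.rpow_le_rpow_of_exponent_ge (div_pos hs hw0) ((div_le_one hw0).2 hw) ha
  rwa [Real.rpow_one] at h

lemma aux_sq (a s : ℝ) (hs : 0 < s) : s ^ (2 * a) = (s ^ a) ^ 2 := by
  rw [mul_comm, Real.rpow_mul hs.le]
  norm_num

lemma aux_term (a s t x y : ℝ) (ha : 1 ≤ a) (hs : 0 < s) (ht : 0 < t) :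
    (x + y) ^ 2 / (s + t) ^ (2 * a) ≤
      s / (s + t) * (x ^ 2 / s ^ (2 * a)) + t / (s + t) * (y ^ 2 / t ^ (2 * a)) := by
  have hw : 0 < s + t := by positivity
  have hp := aux_scale_s12 a s (s + t) ha hs (by linarith)
  have hq := aux_scale_s12 a t (s + t) ha ht (by linarith)
  have hsum : s / (s + t) + t / (s + t) = 1 := by field_simp
  rw [aux_sq a s hs, aux_sq a t ht, aux_sq a _ hw]
  have hP : 0 < s ^ a := Real.rpow_pos_of_pos hs a
  have hQ : 0 < t ^ a := Real.rpow_pos_of_pos ht a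
  have hW : 0 < (s + t) ^ a := Real.rpow_pos_of_pos hw a
  generalize s ^ a = P at *
  generalize t ^ a = Q at *
  generalize (s + t) ^ a = W at *
  generalize s / (s + t) = l at *
  generalize t / (s + t) = m at *
  have e : (x + y) ^ 2 / W ^ 2 = (P / W * (x / P) + Q / W * (y / Q)) ^ 2 := by
    field_simp
  rw [e, ← div_pow, ← div_pow]
  have hp0 : 0 < P / W := by positivity
  have hq0 : 0 < Q / W := by positivity
  generalize P / W = p at *
  generalize Q / W = q at *
  generalize x / P = X at *
  generalize y / Q = Y at *
  calc (p * X + q * Y) ^ 2 ≤ (p + q) * (p * X ^ 2 + q * Y ^ 2) := by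
        nlinarith [mul_nonneg (mul_pos hp0 hq0).le (sq_nonneg (X - Y))]
    _ ≤ 1 * (p * X ^ 2 + q * Y ^ 2) := by
        apply mul_le_mul_of_nonneg_right (by linarith) (by positivity)
    _ ≤ l * X ^ 2 + m * Y ^ 2 := by
        rw [one_mul]; gcongr

/-- Triangle inequality for the anisotropic distance function: if `s = |x|_a`, `t = |y|_a`
and `u = |x+y|_a`, then `u ≤ s + t`. -/
theorem stmt12 (n : ℕ) (hn : 1 ≤ n) (a : Fin n → ℝ) (ha : ∀ k, 1 ≤ a k)
    (x y : Fin n → ℝ) (hx : x ≠ 0) (hy : y ≠ 0) (hxy : x + y ≠ 0)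
    (s t u : ℝ) (hs : 0 < s) (ht : 0 < t) (hu : 0 < u)
    (hxs : ∑ k : Fin n, x k ^ 2 / s ^ (2 * a k) = 1)
    (hyt : ∑ k : Fin n, y k ^ 2 / t ^ (2 * a k) = 1)
    (hxyu : ∑ k : Fin n, (x k + y k) ^ 2 / u ^ (2 * a k) = 1) :
    u ≤ s + t := by
  by_contra hlt
  have hlt : s + t < u := not_le.mp hlt
  have hw : 0 < s + t := by positivity
  have h1 : ∑ k : Fin n, (x k + y k) ^ 2 / (s + t) ^ (2 * a k) ≤ 1 := by
    calc _ ≤ ∑ k : Fin n, (s / (s + t) * (x k ^ 2 / s ^ (2 * a k))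
              + t / (s + t) * (y k ^ 2 / t ^ (2 * a k))) :=
          Finset.sum_le_sum fun k _ => aux_term (a k) s t (x k) (y k) (ha k) hs ht
      _ = 1 := by
          rw [Finset.sum_add_distrib, ← Finset.mul_sum, ← Finset.mul_sum, hxs, hyt]
          field_simp
  obtain ⟨j, hj⟩ := Function.ne_iff.mp hxy
  have hj : x j + y j ≠ 0 := by simpa using hj
  have hpow : ∀ k, (s + t) ^ (2 * a k) < u ^ (2 * a k) := fun k =>
    Real.rpow_lt_rpow hw.le hlt (by linarith [ha k])
  have hpos : ∀ k, 0 < (s + t) ^ (2 * a k) := fun k => Real.rpow_pos_of_pos hw _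
  have h2 : ∑ k : Fin n, (x k + y k) ^ 2 / u ^ (2 * a k) <
      ∑ k : Fin n, (x k + y k) ^ 2 / (s + t) ^ (2 * a k) := by
    apply Finset.sum_lt_sum
    · intro k _
      exact div_le_div_of_nonneg_left (sq_nonneg _) (hpos k) (hpow k).le
    · exact ⟨j, Finset.mem_univ j, div_lt_div_of_pos_left (by positivity) (hpos j) (hpow j)⟩
  linarith
end

section
/- (Comparison of the anisotropic distance with ℓ^∞- and ℓ^1-type expressions.) Let n ≥ 1 and let a₁, …, a_n be real numbers with a_k ≥ 1 for every k. Let x ∈ ℝⁿ with x ≠ 0 and let t > 0 satisfy ∑_{k=1}^n x_k²/t^{2a_k} = 1. Then max_{1≤k≤n} |x_k|^{1/a_k} ≤ t and t ≤ ∑_{k=1}^n |x_k|^{1/a_k}. -/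
/-- Comparison of the anisotropic distance with `ℓ^∞`- and `ℓ^1`-type expressions:
if `t = |x|_a` then `max_k |x k|^(1/a k) ≤ t ≤ ∑ k, |x k|^(1/a k)`. -/
theorem stmt13 (n : ℕ) (hn : 1 ≤ n) (a : Fin n → ℝ) (ha : ∀ k, 1 ≤ a k)
    (x : Fin n → ℝ) (hx : x ≠ 0) (t : ℝ) (ht : 0 < t)
    (hxt : ∑ k : Fin n, x k ^ 2 / t ^ (2 * a k) = 1) :
    (∀ k : Fin n, |x k| ^ (1 / a k) ≤ t) ∧ t ≤ ∑ k : Fin n, |x k| ^ (1 / a k) := by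
  have hu : ∀ k, 0 ≤ |x k| ^ (1 / a k) := fun k => Real.rpow_nonneg (abs_nonneg _) _
  have hv : ∀ k, 0 ≤ |x k| ^ (1 / a k) / t := fun k => div_nonneg (hu k) ht.le
  have key : ∀ k, x k ^ 2 / t ^ (2 * a k) = (|x k| ^ (1 / a k) / t) ^ (2 * a k) := by
    intro k
    have hk : a k ≠ 0 := by linarith [ha k]
    rw [Real.div_rpow (hu k) ht.le, ← Real.rpow_mul (abs_nonneg _)]
    have h2 : 1 / a k * (2 * a k) = 2 := by field_simp
    rw [h2, Real.rpow_two, sq_abs]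
  have hle : ∀ k, |x k| ^ (1 / a k) / t ≤ 1 := by
    intro k
    have h1 : x k ^ 2 / t ^ (2 * a k) ≤ 1 := by
      rw [← hxt]
      exact Finset.single_le_sum (f := fun k => x k ^ 2 / t ^ (2 * a k))
        (fun i _ => by positivity) (Finset.mem_univ k)
    rw [key k] at h1
    by_contra! hc
    have := Real.one_lt_rpow hc (show 0 < 2 * a k by linarith [ha k])
    linarith
  refine ⟨fun k => (div_le_one ht).1 (hle k), ?_⟩
  rw [← one_le_div ht, Finset.sum_div]
  refine hxt.symm.le.trans (Finset.sum_le_sum fun k _ => ?_)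
  rw [key k]
  exact Real.rpow_le_self_of_le_one (hv k) (hle k) (by linarith [ha k])
end

section
/- Let ψ : ℝ → ℂ be a Schwartz function with 𝓕ψ(ξ) = 1 for |ξ| ≤ 1 and 𝓕ψ(ξ) = 0 for |ξ| ≥ 2, and let 0 < s < 1. Then there exists a constant C > 0 such that for every R > 0, every Schwartz function u : ℝ → ℂ with supp 𝓕u ⊆ [−R, R], and every x ∈ ℝ, one has |u(x)|^s ≤ C · R^{1−s} · ∫_ℝ |u(y)|^s |Ψ(x − y)|^s dy, where Ψ(y) = R ψ(R y). -/
open scoped ENNReal NNReal FourierTransform SchwartzMap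
open MeasureTheory

lemma aux_fourier_affine (f : ℝ → ℂ) (b c : ℝ) (hb : b ≠ 0) (ξ : ℝ) :
    𝓕 (fun y => f (b * y + c)) ξ
      = ((|b⁻¹| : ℝ) : ℂ) * ((𝐞 (c * ξ / b) : Circle) : ℂ) * 𝓕 f (ξ / b) := by
  rw [Real.fourier_real_eq, Real.fourier_real_eq]
  have h1 : (∫ y, 𝐞 (-(y * ξ)) • f (b * y + c))
      = ∫ y, (fun t => 𝐞 (-((t - c) / b * ξ)) • f t) (b * y + c) := by
    congr 1; ext y
    have : (b * y + c - c) / b = y := by field_simp; ring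
    simp only [this]
  rw [h1, Measure.integral_comp_mul_left (fun z => (fun t => 𝐞 (-((t - c) / b * ξ)) • f t) (z + c)) b,
    integral_add_right_eq_self (fun t => 𝐞 (-((t - c) / b * ξ)) • f t) c]
  rw [mul_assoc, ← integral_const_mul]
  simp only [Complex.real_smul]
  congr 2; ext t
  have : -((t - c) / b * ξ) = c * ξ / b + (-(t * (ξ / b))) := by field_simp; ring
  rw [this, AddChar.map_add_eq_mul]
  simp [Circle.smul_def, mul_assoc]

/-- the Schwartz function y ↦ a ψ(b y + c) -/
lemma aux_exists_affine (ψ : 𝓢(ℝ, ℂ)) (a b c : ℝ) (hb : b ≠ 0) :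
    ∃ g : 𝓢(ℝ, ℂ), ∀ y, g y = (a : ℂ) * ψ (b * y + c) := by
  have hg : Function.HasTemperateGrowth (fun y : ℝ => b * y + c) := by fun_prop
  have hl : AntilipschitzWith (Real.toNNReal |b|⁻¹) (fun y : ℝ => b * y + c) := by
    refine AntilipschitzWith.of_le_mul_dist fun x y => ?_
    rw [Real.dist_eq, Real.dist_eq, Real.coe_toNNReal _ (by positivity)]
    have : b * x + c - (b * y + c) = b * (x - y) := by ring
    rw [this, abs_mul, inv_mul_cancel_left₀ (abs_ne_zero.2 hb)]
  exact ⟨(a : ℂ) • SchwartzMap.compCLMOfAntilipschitz ℂ hg hl ψ, fun y => by simp⟩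

lemma aux_repro_s16 (f g : 𝓢(ℝ, ℂ)) (h : ∀ ξ, 𝓕 (f : ℝ → ℂ) ξ ≠ 0 → 𝓕 (g : ℝ → ℂ) ξ = 1) (x : ℝ) :
    f x = ∫ y, f y * g (x - y) := by
  have h1 : SchwartzMap.convolution (ContinuousLinearMap.mul ℂ ℂ) f g = f := by
    have : 𝓕 (SchwartzMap.convolution (ContinuousLinearMap.mul ℂ ℂ) f g) = 𝓕 f := by
      rw [SchwartzMap.fourier_convolution]
      ext ξ
      rw [SchwartzMap.pairing_apply_apply]
      simp only [ContinuousLinearMap.mul_apply', SchwartzMap.fourier_coe]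
      by_cases h0 : 𝓕 (f : ℝ → ℂ) ξ = 0
      · simp [h0]
      · simp [h ξ h0]
    have := congrArg (fun k : 𝓢(ℝ, ℂ) => 𝓕⁻ k) this
    simpa using this
  have h2 := SchwartzMap.convolution_apply (ContinuousLinearMap.mul ℂ ℂ) f g x
  rw [h1] at h2
  rw [h2]; rfl

lemma aux_mul (f g v : 𝓢(ℝ, ℂ)) (hv : ∀ y, v y = f y * g y) (ξ : ℝ) :
    𝓕 (v : ℝ → ℂ) ξ = ∫ η, 𝓕 (f : ℝ → ℂ) η * 𝓕 (g : ℝ → ℂ) (ξ - η) := by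
  have h2 := SchwartzMap.convolution_apply (ContinuousLinearMap.mul ℂ ℂ) (𝓕 f) (𝓕 g) ξ
  have h3 : SchwartzMap.convolution (ContinuousLinearMap.mul ℂ ℂ) (𝓕 f) (𝓕 g) = 𝓕 v := by
    have hh : ∀ (k : 𝓢(ℝ, ℂ)) (t : ℝ), 𝓕 (𝓕 k) t = k (-t) := by
      intro k t
      have : 𝓕⁻ (𝓕 k) (-t) = k (-t) := by simp
      rw [← this, SchwartzMap.fourierInv_coe, SchwartzMap.fourier_coe, Real.fourierInv_eq_fourier_neg, neg_neg]
    have : 𝓕 (SchwartzMap.convolution (ContinuousLinearMap.mul ℂ ℂ) (𝓕 f) (𝓕 g)) = 𝓕 (𝓕 v) := by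
      rw [SchwartzMap.fourier_convolution]
      ext t
      rw [SchwartzMap.pairing_apply_apply]
      simp only [ContinuousLinearMap.mul_apply', hh, hv]
    have := congrArg (fun k : 𝓢(ℝ, ℂ) => 𝓕⁻ k) this
    simpa using this
  rw [h3] at h2
  rw [← SchwartzMap.fourier_coe, h2]; rfl

/-- The Plancherel-Polya inequality from `L^s` to `L^1`. -/
lemma aux_npp (v g : 𝓢(ℝ, ℂ)) (h : ∀ ξ, 𝓕 (v : ℝ → ℂ) ξ ≠ 0 → 𝓕 (g : ℝ → ℂ) ξ = 1)
    (K : ℝ≥0∞) (hK : ∀ y, ‖g y‖ₑ ≤ K) (s : ℝ) (hs : 0 < s) (hs1 : s < 1) :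
    (∫⁻ y, ‖v y‖ₑ) ^ s ≤ K ^ (1 - s) * ∫⁻ y, ‖v y‖ₑ ^ s := by
  set I := ∫⁻ y, ‖v y‖ₑ ^ s with hI
  set A := ⨆ z, ‖v z‖ₑ with hA
  have hAle : ∀ z, ‖v z‖ₑ ≤ A := fun z => le_iSup (fun z => ‖v z‖ₑ) z
  have hAfin : A ≠ ∞ := by
    refine ne_top_of_le_ne_top (b := ENNReal.ofReal (SchwartzMap.seminorm ℝ 0 0 v)) ENNReal.ofReal_ne_top ?_
    refine iSup_le fun z => ?_
    rw [← ofReal_norm]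
    exact ENNReal.ofReal_le_ofReal (SchwartzMap.norm_le_seminorm ℝ v z)
  have hL1 : (∫⁻ y, ‖v y‖ₑ) ≤ A ^ (1 - s) * I := by
    rw [hI, ← lintegral_const_mul' _ _ (ENNReal.rpow_ne_top_of_nonneg (by linarith) hAfin)]
    refine lintegral_mono fun y => ?_
    calc ‖v y‖ₑ = ‖v y‖ₑ ^ (1 - s) * ‖v y‖ₑ ^ s := by
          rw [← ENNReal.rpow_add_of_nonneg _ _ (by linarith) hs.le]; simp
      _ ≤ _ := by gcongr; exact hAle y
  have hA1 : A ≤ K * (A ^ (1 - s) * I) := by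
    refine iSup_le fun z => ?_
    rw [aux_repro_s16 v g h z]
    calc _ ≤ ∫⁻ y, ‖v y * g (z - y)‖ₑ := enorm_integral_le_lintegral_enorm _
      _ ≤ ∫⁻ y, K * ‖v y‖ₑ := by
          refine lintegral_mono fun y => ?_
          rw [enorm_mul, mul_comm]
          gcongr; exact hK _
      _ = K * ∫⁻ y, ‖v y‖ₑ := lintegral_const_mul _ v.continuous.enorm.measurable
      _ ≤ _ := by gcongr
  have hA2 : A ^ s ≤ K * I := by
    by_cases h0 : A = 0
    · simp [h0, hs]
    have e : A = A ^ (1 - s) * A ^ s := by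
      rw [← ENNReal.rpow_add_of_nonneg _ _ (by linarith) hs.le]; simp
    have : A ^ (1 - s) * A ^ s ≤ A ^ (1 - s) * (K * I) := by
      rw [← e]; calc A ≤ _ := hA1
        _ = _ := by ring
    refine (ENNReal.mul_le_mul_iff_right ?_ ?_).1 this
    · simp [ENNReal.rpow_eq_zero_iff, h0, hAfin]
    · exact ENNReal.rpow_ne_top_of_nonneg (by linarith) hAfin
  calc (∫⁻ y, ‖v y‖ₑ) ^ s ≤ (A ^ (1 - s) * I) ^ s := by gcongr
    _ = (A ^ s) ^ (1 - s) * I ^ s := by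
        rw [ENNReal.mul_rpow_of_nonneg _ _ hs.le, ← ENNReal.rpow_mul, ← ENNReal.rpow_mul, mul_comm s]
    _ ≤ (K * I) ^ (1 - s) * I ^ s := by
        gcongr
    _ = K ^ (1 - s) * I := by
        rw [ENNReal.mul_rpow_of_nonneg _ _ (by linarith), mul_assoc,
          ← ENNReal.rpow_add_of_nonneg _ _ (by linarith) hs.le]; simp

/-- Pointwise estimate for exponents below 1 in one dimension: if `𝓕ψ = 1` on `[-1,1]` and
`𝓕ψ = 0` outside `(-2,2)`, and `0 < s < 1`, then there is `C > 0` such that every Schwartz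
function `u` with `supp 𝓕u ⊆ [-R, R]` satisfies
`|u(x)|^s ≤ C R^{1-s} ∫ |u(y)|^s |Ψ(x-y)|^s dy` with `Ψ(y) = R ψ(R y)`. -/
theorem stmt16 (ψ : 𝓢(ℝ, ℂ))
    (hψ1 : ∀ ξ : ℝ, |ξ| ≤ 1 → 𝓕 (ψ : ℝ → ℂ) ξ = 1)
    (hψ0 : ∀ ξ : ℝ, 2 ≤ |ξ| → 𝓕 (ψ : ℝ → ℂ) ξ = 0)
    (s : ℝ) (hs : 0 < s) (hs1 : s < 1) :
    ∃ C : ℝ≥0∞, 0 < C ∧ C ≠ ∞ ∧ ∀ (R : ℝ), 0 < R →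
      ∀ u : 𝓢(ℝ, ℂ), Function.support (𝓕 (u : ℝ → ℂ)) ⊆ Set.Icc (-R) R →
        ∀ x : ℝ,
          (‖u x‖₊ : ℝ≥0∞) ^ s
            ≤ C * ENNReal.ofReal (R ^ (1 - s))
                * ∫⁻ y : ℝ, (‖u y‖₊ : ℝ≥0∞) ^ s * (‖(R : ℂ) * ψ (R * (x - y))‖₊ : ℝ≥0∞) ^ s := by
  set M : ℝ := SchwartzMap.seminorm ℝ 0 0 ψ + 1 with hM
  have hM0 : 0 < M := by positivity
  have hψM : ∀ y, ‖ψ y‖ ≤ M := fun y =>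
    (SchwartzMap.norm_le_seminorm ℝ ψ y).trans (by simp [hM])
  refine ⟨ENNReal.ofReal ((3 * M) ^ (1 - s)), ?_, ENNReal.ofReal_ne_top, ?_⟩
  · rw [ENNReal.ofReal_pos]; positivity
  intro R hR u hu x
  have key : ∀ a : ℝ, 0 < a → ∃ g : 𝓢(ℝ, ℂ), (∀ y, g y = (a : ℂ) * ψ (a * y)) ∧
      ∀ ξ, |ξ| ≤ a → 𝓕 (g : ℝ → ℂ) ξ = 1 := by
    intro a ha
    obtain ⟨g, hg⟩ := aux_exists_affine ψ a a 0 ha.ne'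
    obtain ⟨g', hg'⟩ := aux_exists_affine ψ 1 a 0 ha.ne'
    refine ⟨g, fun y => by simpa using hg y, fun ξ hξ => ?_⟩
    have e : (g : ℝ → ℂ) = (a : ℂ) • (fun y => ψ (a * y + 0)) := by
      ext y; simp [hg]
    have e3 : |ξ / a| ≤ 1 := by
      rw [abs_div, abs_of_pos ha, div_le_one ha]; exact hξ
    have e2 : 𝓕 ((a : ℂ) • (fun y => ψ (a * y + 0))) ξ
        = (a : ℂ) * 𝓕 (fun y => ψ (a * y + 0)) ξ := by
      simp only [Real.fourier_real_eq, Pi.smul_apply]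
      rw [← integral_const_mul]
      congr 1; ext t
      simp [Circle.smul_def]; ring
    rw [e, e2, aux_fourier_affine ψ a 0 ha.ne', hψ1 _ e3]
    have : (a : ℂ) ≠ 0 := by exact_mod_cast ha.ne'
    simp [abs_of_pos ha, this]
  obtain ⟨G, hG, hGF⟩ := key R hR
  obtain ⟨H, hH, hHF⟩ := key (3 * R) (by positivity)
  obtain ⟨P, hP⟩ := aux_exists_affine G 1 (-1) x (by norm_num)
  have hP' : ∀ y, P y = G (x - y) := fun y => by
    rw [hP]; simp only [Complex.ofReal_one, one_mul]; congr 1; ring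
  have hPF : ∀ ξ, 2 * R ≤ |ξ| → 𝓕 (P : ℝ → ℂ) ξ = 0 := by
    intro ξ hξ
    have e : (P : ℝ → ℂ) = fun y => ((fun t => (R : ℂ) * ψ t) (-R * y + R * x)) := by
      ext y; rw [hP', hG]; simp only; congr 2; ring
    have e1 : 2 ≤ |ξ / -R| := by
      rw [abs_div, abs_neg, abs_of_pos hR, le_div_iff₀ hR]; exact hξ
    have e2 : 𝓕 (fun t => (R : ℂ) * ψ t) (ξ / -R) = (R : ℂ) * 𝓕 (ψ : ℝ → ℂ) (ξ / -R) := by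
      simp only [Real.fourier_real_eq]
      rw [← integral_const_mul]
      congr 1; ext t
      simp [Circle.smul_def]; ring
    rw [e, aux_fourier_affine (fun t => (R : ℂ) * ψ t) (-R) (R * x) (by linarith), e2, hψ0 _ e1]
    simp
  set v : 𝓢(ℝ, ℂ) := SchwartzMap.pairing (ContinuousLinearMap.mul ℂ ℂ) u P with hv'
  have hv : ∀ y, v y = u y * P y := fun y => by
    rw [hv', SchwartzMap.pairing_apply_apply]; simp
  have hu' : ∀ η, 𝓕 (u : ℝ → ℂ) η ≠ 0 → |η| ≤ R := fun η hη => abs_le.2 (hu hη)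
  have hvF : ∀ ξ, 𝓕 (v : ℝ → ℂ) ξ ≠ 0 → 𝓕 (H : ℝ → ℂ) ξ = 1 := by
    intro ξ hξ
    apply hHF
    by_contra hc
    apply hξ
    rw [aux_mul u P v hv]
    rw [← integral_zero ℝ ℂ]
    congr 1; ext η
    by_cases h0 : 𝓕 (u : ℝ → ℂ) η = 0
    · simp [h0]
    · have := hu' η h0
      rw [hPF (ξ - η), mul_zero]
      have := abs_sub_abs_le_abs_sub ξ η
      linarith
  have hK : ∀ y, ‖H y‖ₑ ≤ ENNReal.ofReal (3 * R * M) := by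
    intro y
    rw [← ofReal_norm, hH]
    apply ENNReal.ofReal_le_ofReal
    rw [norm_mul, Complex.norm_real, Real.norm_of_nonneg (by positivity)]
    gcongr; exact hψM _
  have hmain := aux_npp v H hvF _ hK s hs hs1
  have hux : ‖u x‖ₑ ≤ ∫⁻ y, ‖v y‖ₑ := by
    rw [aux_repro_s16 u G (fun ξ h => hGF ξ (hu' ξ h)) x]
    simp only [hv, hP']
    exact enorm_integral_le_lintegral_enorm _
  calc (‖u x‖₊ : ℝ≥0∞) ^ s = ‖u x‖ₑ ^ s := rfl
    _ ≤ (∫⁻ y, ‖v y‖ₑ) ^ s := by gcongr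
    _ ≤ _ := hmain
    _ = _ := by
      congr 1
      · rw [ENNReal.ofReal_rpow_of_pos (by positivity), ← ENNReal.ofReal_mul (by positivity),
          ← Real.mul_rpow (by positivity) hR.le]
        congr 2; ring
      · congr 1; ext y
        rw [hv, hP', hG, enorm_mul, ENNReal.mul_rpow_of_nonneg _ _ hs.le]
        rfl
end

section
/- (Anisotropic Sobolev embedding inequality for Lizorkin–Triebel quasi-norms of band-limited sequences, unmixed integrability.) Let n ≥ 1, let a₁, …, a_n be real numbers with a_k ≥ 1 for every k, let s, t ∈ ℝ with s > t and 0 < p < r < ∞ satisfy s − (a₁ + ⋯ + a_n)/p = t − (a₁ + ⋯ + a_n)/r, let 0 < q < ∞ and A > 0. Then there exists a constant c > 0 such that for every sequence (f_j)_{j∈ℕ} of Schwartz functions on ℝⁿ with supp 𝓕f_j ⊆ [−A·2^{j a₁}, A·2^{j a₁}] × ⋯ × [−A·2^{j a_n}, A·2^{j a_n}] for all j, one has ‖(∑_{j=0}^∞ 2^{t j q} |f_j(·)|^q)^{1/q}‖_r ≤ c · ‖sup_{j∈ℕ} 2^{s j} |f_j(·)|‖_p, where both sides may be infinite. -/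
open scoped ENNReal NNReal FourierTransform SchwartzMap
open MeasureTheory

theorem key_sum (ε δ q : ℝ) (hε : 0 < ε) (hδ : 0 < δ) (hq : 0 < q) :
    ∃ K : ℝ≥0∞, 0 < K ∧ K ≠ ∞ ∧ ∀ (G N : ℝ≥0∞) (u : ℕ → ℝ≥0∞), N ≠ ∞ →
      (∀ j : ℕ, u j ≤ 2 ^ (-(ε * j)) * G) → (∀ j : ℕ, u j ≤ 2 ^ (δ * j) * N) →
      ∑' j, (u j) ^ q ≤ K * (G ^ (δ / (ε + δ)) * N ^ (ε / (ε + δ))) ^ q := by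
  set η := min ε δ with hη
  have hη0 : 0 < η := lt_min hε hδ
  set b : ℝ := 2 ^ (-(η * q)) with hb
  have hb0 : 0 < b := by positivity
  have hb1 : b < 1 := Real.rpow_lt_one_of_one_lt_of_neg (by norm_num) (by nlinarith [mul_pos hη0 hq])
  have hsumm : Summable (fun k : ℤ => b ^ k.natAbs) := by
    apply Summable.of_nat_of_neg <;> simpa using summable_geometric_of_lt_one hb0.le hb1
  set S := ∑' k : ℤ, ENNReal.ofReal (b ^ k.natAbs) with hS
  have hStop : S ≠ ∞ := by
    rw [hS, ← ENNReal.ofReal_tsum_of_nonneg (fun _ => by positivity) hsumm]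
    exact ENNReal.ofReal_ne_top
  have hS0 : 0 < S := by
    refine lt_of_lt_of_le ?_ (ENNReal.le_tsum (0 : ℤ))
    simp
  have hbi : ENNReal.ofReal b⁻¹ ≠ 0 := by
    simp [hb0]
  refine ⟨ENNReal.ofReal b⁻¹ * S, by positivity, ENNReal.mul_ne_top ENNReal.ofReal_ne_top hStop, ?_⟩
  intro G N u hN h1 h2
  have hK0 : ENNReal.ofReal b⁻¹ * S ≠ 0 := mul_ne_zero hbi hS0.ne'
  by_cases hu0 : ∀ j, u j = 0
  · simp [hu0, hq]
  push Not at hu0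
  obtain ⟨j₀, hj₀⟩ := hu0
  have hG0 : G ≠ 0 := by
    rintro rfl
    exact hj₀ (by simpa using h1 j₀)
  have hN0 : N ≠ 0 := by
    rintro rfl
    exact hj₀ (by simpa using h2 j₀)
  by_cases hGt : G = ∞
  · subst hGt
    have e1 : (0:ℝ) < δ / (ε + δ) := by positivity
    have e2 : (0:ℝ) < ε / (ε + δ) := by positivity
    have : N ^ (ε / (ε + δ)) ≠ 0 := by
      simp [ENNReal.rpow_eq_zero_iff, hN0, hN]
    rw [ENNReal.top_rpow_of_pos e1, ENNReal.top_mul this, ENNReal.top_rpow_of_pos hq,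
      ENNReal.mul_top hK0]
    exact le_top
  -- the finite positive case
  have hut : ∀ j, u j ≠ ∞ := fun j => ne_top_of_le_ne_top
    (ENNReal.mul_ne_top (ENNReal.rpow_ne_top_of_ne_zero (by simp) (by simp)) hN) (h2 j)
  obtain ⟨g, hg⟩ : ∃ g : ℝ, G = ENNReal.ofReal (2 ^ g) := by
    refine ⟨Real.logb 2 G.toReal, ?_⟩
    rw [Real.rpow_logb (by norm_num) (by norm_num) (ENNReal.toReal_pos hG0 hGt),
      ENNReal.ofReal_toReal hGt]
  obtain ⟨m, hm⟩ : ∃ m : ℝ, N = ENNReal.ofReal (2 ^ m) := by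
    refine ⟨Real.logb 2 N.toReal, ?_⟩
    rw [Real.rpow_logb (by norm_num) (by norm_num) (ENNReal.toReal_pos hN0 hN),
      ENNReal.ofReal_toReal hN]
  have h2r : ∀ x : ℝ, (2:ℝ≥0∞) ^ x = ENNReal.ofReal (2 ^ x) := by
    intro x
    rw [← ENNReal.ofReal_rpow_of_pos (by norm_num)]; simp
  have h2ne : ∀ x : ℝ, (2:ℝ≥0∞) ^ x ≠ ∞ := fun x => by rw [h2r]; exact ENNReal.ofReal_ne_top
  rw [← h2r] at hg hm
  set x0 := (g - m) / (ε + δ) with hx0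
  set fl := ⌊x0⌋ with hfl
  have hED : 0 < ε + δ := by positivity
  have hterm : ∀ j : ℕ, (u j) ^ q ≤ (ENNReal.ofReal b⁻¹ * (G ^ (δ / (ε + δ)) * N ^ (ε / (ε + δ))) ^ q) *
      ENNReal.ofReal (b ^ ((j : ℤ) - fl).natAbs) := by
    intro j
    have hbb : ENNReal.ofReal b⁻¹ = 2 ^ (η * q) := by
      rw [h2r, hb, ← Real.rpow_neg (by norm_num), neg_neg]
    have hbp : ENNReal.ofReal (b ^ ((j : ℤ) - fl).natAbs) = 2 ^ (-(η * q) * |(j:ℝ) - fl|) := by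
      rw [h2r, hb, ← Real.rpow_natCast, ← Real.rpow_mul (by norm_num)]
      congr 3
      rw [Nat.cast_natAbs]; push_cast; rfl
    rw [hbb, hbp, hg, hm]
    simp only [← ENNReal.rpow_mul, ← ENNReal.rpow_add _ _ (two_ne_zero) (ENNReal.ofNat_ne_top)]
    have hexp : ∀ z, u j ≤ 2 ^ z → u j ^ q ≤ 2 ^ (z * q) := by
      intro z hz
      rw [ENNReal.rpow_mul]
      gcongr
    have hfl1 : (fl:ℝ) ≤ x0 := Int.floor_le x0
    have hfl2 : x0 < fl + 1 := Int.lt_floor_add_one x0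
    have hgm : g = m + (ε + δ) * x0 := by rw [hx0]; field_simp; ring
    have hbase : g * (δ / (ε + δ)) + m * (ε / (ε + δ)) = m + δ * x0 := by
      rw [hgm]; field_simp; ring
    have hηε : η ≤ ε := min_le_left _ _
    have hηδ : η ≤ δ := min_le_right _ _
    have habs : |(j:ℝ) - fl| ≤ |(j:ℝ) - x0| + 1 := by
      have := abs_sub_le (j:ℝ) x0 fl
      have h3 : |x0 - fl| ≤ 1 := by rw [abs_le]; constructor <;> linarith
      linarith
    rcases le_total x0 j with hj | hj
    · have := hexp (-(ε * j) + g) (by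
        rw [ENNReal.rpow_add _ _ (two_ne_zero) (ENNReal.ofNat_ne_top), ← hg]; exact h1 j)
      refine this.trans ?_
      apply ENNReal.rpow_le_rpow_of_exponent_le (by norm_num)
      rw [abs_of_nonneg (by linarith : (0:ℝ) ≤ j - x0)] at habs
      have key : -(ε * j) + g ≤ η + (m + δ * x0) - η * |(j:ℝ) - fl| := by
        rw [hgm]
        nlinarith [mul_le_mul_of_nonneg_left habs hη0.le, mul_le_mul_of_nonneg_right hηε (by linarith : (0:ℝ) ≤ j - x0)]
      rw [hbase]
      nlinarith [mul_le_mul_of_nonneg_right key hq.le]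
    · have := hexp (δ * j + m) (by
        rw [ENNReal.rpow_add _ _ (two_ne_zero) (ENNReal.ofNat_ne_top), ← hm]; exact h2 j)
      refine this.trans ?_
      apply ENNReal.rpow_le_rpow_of_exponent_le (by norm_num)
      rw [abs_of_nonpos (by linarith : (j:ℝ) - x0 ≤ 0)] at habs
      have key : δ * j + m ≤ η + (m + δ * x0) - η * |(j:ℝ) - fl| := by
        nlinarith [mul_le_mul_of_nonneg_left habs hη0.le, mul_le_mul_of_nonneg_right hηδ (by linarith : (0:ℝ) ≤ x0 - j)]
      rw [hbase]
      nlinarith [mul_le_mul_of_nonneg_right key hq.le]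
  refine (ENNReal.tsum_le_tsum hterm).trans ?_
  rw [ENNReal.tsum_mul_left, mul_assoc, mul_assoc, mul_comm S]
  gcongr
  exact ENNReal.tsum_comp_le_tsum_of_injective (f := fun j : ℕ => (j:ℤ) - fl)
    (fun x y h => by simpa using h) (fun k : ℤ => ENNReal.ofReal (b ^ k.natAbs))


theorem repro_kernel (n : ℕ) (A : ℝ) :
    ∃ ψ : 𝓢(EuclideanSpace ℝ (Fin n), ℂ), ∀ g : 𝓢(EuclideanSpace ℝ (Fin n), ℂ),
      Function.support (𝓕 (g : EuclideanSpace ℝ (Fin n) → ℂ)) ⊆ {ξ | ∀ k, |ξ k| ≤ A} →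
      ∀ x, g x = ∫ y, g y * ψ (x - y) := by
  have hbd : Bornology.IsBounded {ξ : EuclideanSpace ℝ (Fin n) | ∀ k, |ξ k| ≤ A} := by
    rw [isBounded_iff_forall_norm_le]
    refine ⟨√(∑ _k : Fin n, A ^ 2), fun ξ hξ => ?_⟩
    rw [EuclideanSpace.norm_eq]
    apply Real.sqrt_le_sqrt
    apply Finset.sum_le_sum
    intro k _
    exact pow_le_pow_left₀ (norm_nonneg _) (hξ k) 2
  obtain ⟨R, hR0, hR⟩ := hbd.subset_closedBall_lt 0 (0 : EuclideanSpace ℝ (Fin n))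
  let β : ContDiffBump (0 : EuclideanSpace ℝ (Fin n)) := ⟨R, R + 1, hR0, by linarith⟩
  have hcs : HasCompactSupport (fun ξ => (β ξ : ℂ)) :=
    β.hasCompactSupport.comp_left (g := fun x : ℝ => (x : ℂ)) (by simp)
  let φ : 𝓢(EuclideanSpace ℝ (Fin n), ℂ) :=
    hcs.toSchwartzMap (Complex.ofRealCLM.contDiff.comp β.contDiff)
  have hφ : ∀ ξ, φ ξ = (β ξ : ℂ) := fun _ => rfl
  refine ⟨𝓕⁻ φ, fun g hg x => ?_⟩
  have h1 : SchwartzMap.convolution (ContinuousLinearMap.mul ℂ ℂ) g (𝓕⁻ φ) = g := by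
    suffices h : 𝓕 (SchwartzMap.convolution (ContinuousLinearMap.mul ℂ ℂ) g (𝓕⁻ φ)) = 𝓕 g by
      have h' := congrArg (fun z : 𝓢(EuclideanSpace ℝ (Fin n), ℂ) =>
        (𝓕⁻ z : 𝓢(EuclideanSpace ℝ (Fin n), ℂ))) h
      simpa only [FourierTransform.fourierInv_fourier_eq] using h'
    rw [SchwartzMap.fourier_convolution, FourierTransform.fourier_fourierInv_eq]
    ext ξ
    rw [SchwartzMap.pairing_apply_apply]
    simp only [ContinuousLinearMap.mul_apply', hφ]
    by_cases hξ : 𝓕 g ξ = 0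
    · simp [hξ]
    · have : ξ ∈ Metric.closedBall (0 : EuclideanSpace ℝ (Fin n)) R := by
        apply hR
        apply hg
        exact hξ
      rw [β.one_of_mem_closedBall this]; simp
  conv_lhs => rw [← h1]
  rw [SchwartzMap.convolution_apply]
  rfl

theorem nikolskii_unit (n : ℕ) (A p : ℝ) (hp : 0 < p) :
    ∃ C : ℝ≥0∞, 0 < C ∧ C ≠ ∞ ∧ ∀ g : 𝓢(EuclideanSpace ℝ (Fin n), ℂ),
      Function.support (𝓕 (g : EuclideanSpace ℝ (Fin n) → ℂ)) ⊆ {ξ | ∀ k, |ξ k| ≤ A} →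
      ∀ x, ‖g x‖ₑ ≤ C * (∫⁻ y, ‖g y‖ₑ ^ p) ^ (1 / p) := by
  obtain ⟨ψ, hψ⟩ := repro_kernel n A
  have hle : ∀ g : 𝓢(EuclideanSpace ℝ (Fin n), ℂ),
      Function.support (𝓕 (g : EuclideanSpace ℝ (Fin n) → ℂ)) ⊆ {ξ | ∀ k, |ξ k| ≤ A} →
      ∀ x, ‖g x‖ₑ ≤ ∫⁻ y, ‖g y‖ₑ * ‖ψ (x - y)‖ₑ := by
    intro g hg x
    rw [hψ g hg x]
    refine (enorm_integral_le_lintegral_enorm _).trans ?_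
    simp
  rcases le_or_gt p 1 with hp1 | hp1
  · set B : ℝ≥0∞ := ENNReal.ofReal (SchwartzMap.seminorm ℝ 0 0 ψ) + 1 with hB
    have hB0 : 0 < B := by positivity
    have hBt : B ≠ ∞ := by simp [hB]
    refine ⟨B ^ (1 / p), ENNReal.rpow_pos hB0 hBt, ENNReal.rpow_ne_top_of_nonneg (by positivity) hBt, ?_⟩
    intro g hg x
    have hψB : ∀ y, ‖ψ y‖ₑ ≤ B := fun y => by
      rw [← ofReal_norm]
      exact (ENNReal.ofReal_le_ofReal (SchwartzMap.norm_le_seminorm ℝ ψ y)).trans le_self_add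
    set S : ℝ≥0∞ := ⨆ x, ‖g x‖ₑ with hS
    have hSt : S ≠ ∞ := by
      refine ne_top_of_le_ne_top (b := ENNReal.ofReal (SchwartzMap.seminorm ℝ 0 0 g)) ENNReal.ofReal_ne_top ?_
      refine iSup_le fun y => ?_
      rw [← ofReal_norm]
      exact (ENNReal.ofReal_le_ofReal (SchwartzMap.norm_le_seminorm ℝ g y))
    have hgS : ∀ y, ‖g y‖ₑ ≤ S := fun y => le_iSup (fun x => ‖g x‖ₑ) y
    refine (hgS x).trans ?_
    by_cases hS0 : S = 0
    · rw [hS0]; exact zero_le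
    have h1 : S ≤ S ^ (1 - p) * (B * ∫⁻ y, ‖g y‖ₑ ^ p) := by
      refine iSup_le fun z => ?_
      refine (hle g hg z).trans ?_
      rw [← mul_assoc, ← lintegral_const_mul']
      · apply lintegral_mono
        intro y
        have : ‖g y‖ₑ ≤ S ^ (1 - p) * ‖g y‖ₑ ^ p := by
          calc ‖g y‖ₑ = ‖g y‖ₑ ^ (1 - p) * ‖g y‖ₑ ^ p := by
                rw [← ENNReal.rpow_add_of_nonneg _ _ (by linarith) hp.le]; simp
            _ ≤ _ := by
                exact mul_le_mul_left (ENNReal.rpow_le_rpow (hgS y) (by linarith)) _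
        calc ‖g y‖ₑ * ‖ψ (z - y)‖ₑ ≤ (S ^ (1 - p) * ‖g y‖ₑ ^ p) * B := by
              gcongr
              exact hψB _
          _ = _ := by ring
      · exact ENNReal.mul_ne_top (ENNReal.rpow_ne_top_of_nonneg (by linarith) hSt) hBt
    have h2 : S ^ p ≤ B * ∫⁻ y, ‖g y‖ₑ ^ p := by
      have h3 : S ^ (1 - p) * S ^ p ≤ S ^ (1 - p) * (B * ∫⁻ y, ‖g y‖ₑ ^ p) := by
        rw [← ENNReal.rpow_add _ _ hS0 hSt]
        simpa using h1
      refine (ENNReal.mul_le_mul_iff_right ?_ ?_).1 h3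
      · exact (ENNReal.rpow_pos (pos_iff_ne_zero.2 hS0) hSt).ne'
      · exact ENNReal.rpow_ne_top_of_nonneg (by linarith) hSt
    rw [← ENNReal.mul_rpow_of_nonneg _ _ (by positivity : 0 ≤ 1 / p), one_div, ENNReal.le_rpow_inv_iff hp]
    exact h2
  · have hpq := Real.HolderConjugate.conjExponent hp1
    set q := p.conjExponent with hq
    have hq0 : 0 < q := hpq.symm.pos
    set I := (∫⁻ y, ‖ψ y‖ₑ ^ q) ^ (1 / q) with hI
    have hIt : I ≠ ∞ := by
      have hm := (ψ.memLp (ENNReal.ofReal q) volume).eLpNorm_lt_top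
      rw [eLpNorm_eq_lintegral_rpow_enorm_toReal (by simp [hq0]) (by simp), ENNReal.toReal_ofReal hq0.le] at hm
      exact hm.ne
    refine ⟨I + 1, by positivity, by simp [hIt], fun g hg x => ?_⟩
    refine (hle g hg x).trans ?_
    refine (ENNReal.lintegral_mul_le_Lp_mul_Lq volume hpq ?_ ?_).trans ?_
    · exact g.continuous.enorm.aemeasurable
    · exact (ψ.continuous.comp (by fun_prop : Continuous fun y => x - y)).enorm.aemeasurable
    · rw [lintegral_sub_left_eq_self (fun y => ‖ψ y‖ₑ ^ q) x, mul_comm]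
      gcongr
      exact le_self_add

theorem scaling (n : ℕ) (R : Fin n → ℝ) (hR : ∀ k, 0 < R k) :
    ∃ e : EuclideanSpace ℝ (Fin n) ≃L[ℝ] EuclideanSpace ℝ (Fin n),
      (∀ x k, e x k = R k * x k) ∧
      Measure.map e volume = ENNReal.ofReal (∏ k, R k)⁻¹ • volume := by
  let l : EuclideanSpace ℝ (Fin n) ≃ₗ[ℝ] EuclideanSpace ℝ (Fin n) :=
    { toFun := fun x => WithLp.toLp 2 (fun k => R k * x k)
      invFun := fun x => WithLp.toLp 2 (fun k => (R k)⁻¹ * x k)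
      map_add' := fun x y => by ext k; simp [mul_add]
      map_smul' := fun c x => by ext k; simp; ring
      left_inv := fun x => by ext k; simp [(hR k).ne']
      right_inv := fun x => by ext k; simp [(hR k).ne'] }
  have hdet : LinearMap.det (l : EuclideanSpace ℝ (Fin n) →ₗ[ℝ] EuclideanSpace ℝ (Fin n)) = ∏ k, R k := by
    have : (l : EuclideanSpace ℝ (Fin n) →ₗ[ℝ] EuclideanSpace ℝ (Fin n)) =
        Matrix.toLpLin 2 2 (Matrix.diagonal R) := by
      ext x k
      simp [l, Matrix.mulVec_diagonal]
    rw [this, Matrix.toLpLin_eq_toLin, LinearMap.det_toLin, Matrix.det_diagonal]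
  have hpos : 0 < ∏ k, R k := Finset.prod_pos fun k _ => hR k
  refine ⟨l.toContinuousLinearEquiv, fun x k => rfl, ?_⟩
  have := Measure.map_linearMap_addHaar_eq_smul_addHaar (volume : Measure (EuclideanSpace ℝ (Fin n)))
    (f := (l : EuclideanSpace ℝ (Fin n) →ₗ[ℝ] EuclideanSpace ℝ (Fin n))) (by rw [hdet]; exact hpos.ne')
  rw [hdet, abs_of_pos (by positivity)] at this
  exact this

theorem nikolskii (n : ℕ) (A p : ℝ) (hp : 0 < p) :
    ∃ C : ℝ≥0∞, 0 < C ∧ C ≠ ∞ ∧ ∀ (R : Fin n → ℝ), (∀ k, 0 < R k) →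
      ∀ f : 𝓢(EuclideanSpace ℝ (Fin n), ℂ),
      Function.support (𝓕 (f : EuclideanSpace ℝ (Fin n) → ℂ)) ⊆ {ξ | ∀ k, |ξ k| ≤ A * R k} →
      ∀ x, ‖f x‖ₑ ≤ C * (ENNReal.ofReal (∏ k, R k) * ∫⁻ y, ‖f y‖ₑ ^ p) ^ (1 / p) := by
  obtain ⟨C, hC0, hCt, hC⟩ := nikolskii_unit n A p hp
  refine ⟨C, hC0, hCt, fun R hR f hf x => ?_⟩
  obtain ⟨e, he, hmap⟩ := scaling n (fun k => (R k)⁻¹) (fun k => inv_pos.2 (hR k))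
  have hpos : 0 < ∏ k, R k := Finset.prod_pos fun k _ => hR k
  rw [Finset.prod_inv_distrib, inv_inv] at hmap
  let g := SchwartzMap.compCLMOfContinuousLinearEquiv ℂ e f
  have hg : ∀ y, g y = f (e y) := fun _ => rfl
  have hesymm : ∀ y k, e.symm y k = R k * y k := by
    intro y k
    have := he (e.symm y) k
    rw [e.apply_symm_apply] at this
    rw [this]; field_simp [(hR k).ne']
  have hF : ∀ ξ, 𝓕 (g : EuclideanSpace ℝ (Fin n) → ℂ) ξ =
      (∏ k, R k) • 𝓕 (f : EuclideanSpace ℝ (Fin n) → ℂ) (e.symm ξ) := by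
    intro ξ
    rw [Real.fourier_eq, Real.fourier_eq]
    have h1 : ∀ v, inner ℝ v ξ = inner ℝ (e v) (e.symm ξ) := by
      intro v
      simp only [PiLp.inner_apply, he, hesymm]
      apply Finset.sum_congr rfl
      intro k _
      have := (hR k).ne'
      simp
      field_simp
    simp only [h1, hg]
    have h2 := e.toHomeomorph.measurableEmbedding.integral_map (μ := volume)
      (fun v => Real.fourierChar (-(inner ℝ v (e.symm ξ))) • f v)
    have h3 : Measure.map e.toHomeomorph volume = ENNReal.ofReal (∏ k, R k) • (volume : Measure (EuclideanSpace ℝ (Fin n))) := hmap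
    rw [h3, integral_smul_measure, ENNReal.toReal_ofReal hpos.le] at h2
    exact h2.symm
  have hgs : Function.support (𝓕 (g : EuclideanSpace ℝ (Fin n) → ℂ)) ⊆ {ξ | ∀ k, |ξ k| ≤ A} := by
    intro ξ hξ k
    rw [Function.mem_support, hF] at hξ
    have := hf (right_ne_zero_of_smul hξ) k
    rw [hesymm, abs_mul, abs_of_pos (hR k), mul_comm] at this
    exact le_of_mul_le_mul_right this (hR k)
  have := hC g hgs (e.symm x)
  rw [hg, e.apply_symm_apply] at this
  refine this.trans (le_of_eq ?_)
  congr 2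
  have h2 := e.toHomeomorph.measurableEmbedding.lintegral_map (μ := volume)
      (fun v => ‖f v‖ₑ ^ p)
  have h3 : Measure.map e.toHomeomorph volume = ENNReal.ofReal (∏ k, R k) • (volume : Measure (EuclideanSpace ℝ (Fin n))) := hmap
  rw [h3, lintegral_smul_measure] at h2
  exact h2.symm

/-- Anisotropic Sobolev embedding inequality for Lizorkin–Triebel quasi-norms of band-limited
sequences (unmixed integrability): if `s - (a₁+⋯+aₙ)/p = t - (a₁+⋯+aₙ)/r` with `s > t` and
`0 < p < r < ∞`, and `supp 𝓕f_j` is contained in the anisotropic rectangle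
`∏_k [-A·2^{j a_k}, A·2^{j a_k}]`, then
`‖(∑_j 2^{tjq}|f_j|^q)^{1/q}‖_r ≤ c ‖sup_j 2^{sj}|f_j|‖_p`. -/
theorem stmt17 (n : ℕ) (hn : 1 ≤ n) (a : Fin n → ℝ) (ha : ∀ k, 1 ≤ a k)
    (s t : ℝ) (hst : t < s) (p r : ℝ) (hp : 0 < p) (hpr : p < r)
    (hsob : s - (∑ k : Fin n, a k) / p = t - (∑ k : Fin n, a k) / r)
    (q : ℝ) (hq : 0 < q) (A : ℝ) (hA : 0 < A) :
    ∃ c : ℝ≥0∞, 0 < c ∧ c ≠ ∞ ∧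
      ∀ f : ℕ → 𝓢(EuclideanSpace ℝ (Fin n), ℂ),
        (∀ j : ℕ, Function.support (𝓕 (f j : EuclideanSpace ℝ (Fin n) → ℂ))
          ⊆ {ξ : EuclideanSpace ℝ (Fin n) | ∀ k : Fin n, |ξ k| ≤ A * 2 ^ ((j:ℝ) * a k)}) →
        (∫⁻ x : EuclideanSpace ℝ (Fin n),
            (∑' j : ℕ, ((2:ℝ≥0∞) ^ (t * (j:ℝ)) * ‖f j x‖₊) ^ q) ^ (r / q)) ^ (1 / r)
          ≤ c * (∫⁻ x : EuclideanSpace ℝ (Fin n),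
              (⨆ j : ℕ, (2:ℝ≥0∞) ^ (s * (j:ℝ)) * ‖f j x‖₊) ^ p) ^ (1 / p) := by
  obtain ⟨C, hC0, hCt, hC⟩ := nikolskii n A p hp
  have hr : 0 < r := hp.trans hpr
  set a' := ∑ k : Fin n, a k with ha'
  have ha0 : 0 < a' := by
    have : Nonempty (Fin n) := ⟨⟨0, hn⟩⟩
    exact Finset.sum_pos (fun k _ => by linarith [ha k]) Finset.univ_nonempty
  set ε := s - t with hε
  set δ := a' / r with hδ
  have hε0 : 0 < ε := by rw [hε]; linarith
  have hδ0 : 0 < δ := by positivity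
  have hεδ : ε + δ = a' / p := by rw [hε, hδ]; linarith
  have hθ : δ / (ε + δ) = p / r := by rw [hεδ, hδ]; field_simp
  have hθ' : ε / (ε + δ) = 1 - p / r := by
    rw [← hθ]; field_simp; ring
  have hpr' : 0 ≤ 1 - p / r := by
    rw [sub_nonneg, div_le_one hr]; exact hpr.le
  obtain ⟨K, hK0, hKt, hK⟩ := key_sum ε δ q hε0 hδ0 hq
  rw [hθ, hθ'] at hK
  have h20 : (2:ℝ≥0∞) ≠ 0 := two_ne_zero
  have h2t : (2:ℝ≥0∞) ≠ ∞ := ENNReal.ofNat_ne_top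
  refine ⟨K ^ (1 / q) * C ^ (1 - p / r),
    ENNReal.mul_pos (ENNReal.rpow_pos hK0 hKt).ne' (ENNReal.rpow_pos hC0 hCt).ne',
    ENNReal.mul_ne_top (ENNReal.rpow_ne_top_of_nonneg (by positivity) hKt)
      (ENNReal.rpow_ne_top_of_nonneg hpr' hCt), ?_⟩
  intro f hf
  set G : EuclideanSpace ℝ (Fin n) → ℝ≥0∞ :=
    fun x => ⨆ j : ℕ, (2:ℝ≥0∞) ^ (s * (j:ℝ)) * ‖f j x‖₊ with hG
  set M := (∫⁻ x, G x ^ p) ^ (1 / p) with hM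
  have hc0 : K ^ (1 / q) * C ^ (1 - p / r) ≠ 0 :=
    mul_ne_zero (ENNReal.rpow_pos hK0 hKt).ne' (ENNReal.rpow_pos hC0 hCt).ne'
  by_cases hMt : M = ∞
  · rw [hMt, ENNReal.mul_top hc0]; exact le_top
  have hfG : ∀ j x, ‖f j x‖ₑ ≤ 2 ^ (-(s * (j:ℝ))) * G x := by
    intro j x
    have h1 : (2:ℝ≥0∞) ^ (s * (j:ℝ)) * ‖f j x‖₊ ≤ G x :=
      le_iSup (fun j : ℕ => (2:ℝ≥0∞) ^ (s * (j:ℝ)) * ‖f j x‖₊) j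
    calc ‖f j x‖ₑ = 2 ^ (-(s * (j:ℝ))) * (2 ^ (s * (j:ℝ)) * ‖f j x‖₊) := by
          rw [← mul_assoc, ← ENNReal.rpow_add _ _ h20 h2t]; simp [enorm_eq_nnnorm]
      _ ≤ _ := by gcongr
  have hfM : ∀ j x, ‖f j x‖ₑ ≤ 2 ^ ((a' / p - s) * (j:ℝ)) * (C * M) := by
    intro j x
    have h1 := hC (fun k => 2 ^ ((j:ℝ) * a k)) (fun k => by positivity) (f j) (hf j) x
    have h2 : ENNReal.ofReal (∏ k, (2:ℝ) ^ ((j:ℝ) * a k)) = 2 ^ ((j:ℝ) * a') := by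
      rw [← Real.rpow_sum_of_pos (by norm_num), ← Finset.mul_sum,
        ← ENNReal.ofReal_rpow_of_pos (by norm_num)]
      simp [ha']
    have h3 : ∫⁻ y, ‖f j y‖ₑ ^ p ≤ 2 ^ (-(s * (j:ℝ)) * p) * ∫⁻ y, G y ^ p := by
      rw [← lintegral_const_mul' _ _ (ENNReal.rpow_ne_top_of_ne_zero h20 h2t)]
      apply lintegral_mono
      intro y
      calc ‖f j y‖ₑ ^ p ≤ (2 ^ (-(s * (j:ℝ))) * G y) ^ p := by gcongr; exact hfG j y
        _ = _ := by rw [ENNReal.mul_rpow_of_nonneg _ _ hp.le, ← ENNReal.rpow_mul]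
    rw [h2] at h1
    refine h1.trans ?_
    calc _ ≤ C * (2 ^ ((j:ℝ) * a') * (2 ^ (-(s * (j:ℝ)) * p) * ∫⁻ y, G y ^ p)) ^ (1 / p) := by
          gcongr
      _ = _ := by
          rw [← mul_assoc, ← ENNReal.rpow_add _ _ h20 h2t,
            ENNReal.mul_rpow_of_nonneg _ _ (by positivity), ← ENNReal.rpow_mul, ← hM]
          rw [mul_left_comm]
          congr 2
          field_simp
          ring
  have hpt : ∀ x, (∑' j : ℕ, ((2:ℝ≥0∞) ^ (t * (j:ℝ)) * ‖f j x‖₊) ^ q) ^ (r / q) ≤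
      (K ^ (r / q) * (C * M) ^ (r - p)) * G x ^ p := by
    intro x
    have h1 := hK (G x) (C * M) (fun j => (2:ℝ≥0∞) ^ (t * (j:ℝ)) * ‖f j x‖₊)
      (ENNReal.mul_ne_top hCt hMt) (by
        intro j
        calc (2:ℝ≥0∞) ^ (t * (j:ℝ)) * ‖f j x‖₊
            ≤ 2 ^ (t * (j:ℝ)) * (2 ^ (-(s * (j:ℝ))) * G x) := by gcongr; exact hfG j x
          _ = _ := by
            rw [← mul_assoc, ← ENNReal.rpow_add _ _ h20 h2t]
            congr 2; rw [hε]; ring) (by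
        intro j
        calc (2:ℝ≥0∞) ^ (t * (j:ℝ)) * ‖f j x‖₊
            ≤ 2 ^ (t * (j:ℝ)) * (2 ^ ((a' / p - s) * (j:ℝ)) * (C * M)) := by gcongr; exact hfM j x
          _ = _ := by
            rw [← mul_assoc, ← ENNReal.rpow_add _ _ h20 h2t, ← hεδ]
            congr 2; rw [hε]; ring)
    refine (ENNReal.rpow_le_rpow h1 (by positivity : 0 ≤ r / q)).trans (le_of_eq ?_)
    rw [ENNReal.mul_rpow_of_nonneg _ _ (by positivity), ← ENNReal.rpow_mul,
      mul_div_cancel₀ _ hq.ne', ENNReal.mul_rpow_of_nonneg _ _ hr.le, ← ENNReal.rpow_mul,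
      ← ENNReal.rpow_mul, div_mul_cancel₀ _ hr.ne', sub_mul, one_mul, div_mul_cancel₀ _ hr.ne']
    ring
  have hCMt : K ^ (r / q) * (C * M) ^ (r - p) ≠ ∞ :=
    ENNReal.mul_ne_top (ENNReal.rpow_ne_top_of_nonneg (by positivity) hKt)
      (ENNReal.rpow_ne_top_of_nonneg (by linarith) (ENNReal.mul_ne_top hCt hMt))
  have hlint := lintegral_mono (μ := volume) hpt
  rw [lintegral_const_mul' _ _ hCMt] at hlint
  have hMp : ∫⁻ x, G x ^ p = M ^ p := by
    rw [hM, ← ENNReal.rpow_mul, one_div_mul_cancel hp.ne', ENNReal.rpow_one]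
  rw [hMp] at hlint
  refine (ENNReal.rpow_le_rpow hlint (by positivity : 0 ≤ 1 / r)).trans (le_of_eq ?_)
  have e1 : 0 ≤ r - p := by linarith
  rw [ENNReal.mul_rpow_of_nonneg _ _ e1, mul_assoc, mul_assoc,
    ← ENNReal.rpow_add_of_nonneg _ _ e1 hp.le, sub_add_cancel,
    ENNReal.mul_rpow_of_nonneg _ _ (by positivity), ENNReal.mul_rpow_of_nonneg _ _ (by positivity),
    ← ENNReal.rpow_mul, ← ENNReal.rpow_mul, ← ENNReal.rpow_mul, mul_one_div_cancel hr.ne',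
    ENNReal.rpow_one, mul_assoc]
  have x1 : r / q * (1 / r) = 1 / q := by field_simp
  have x2 : (r - p) * (1 / r) = 1 - p / r := by field_simp
  rw [x1, x2]
end
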